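/- arXiv:2501.06560 — 2 statements merged into one kernel-verified Lean document; each statement's English description precedes it below -/
import Mathlib

section
/- Let p and q be distinct primes. The group homomorphism ℤ → ℤ_qˣ sending n to uⁿ, where u ∈ ℤ_qˣ is the unit of the q-adic integers whose underlying element is p (p is invertible in ℤ_q since q does not divide p), is injective. Consequently the diagonal homomorphism ℤ → ∏_{q ≠ p} ℤ_qˣ, n ↦ (pⁿ)_q, is injective, so the monodromy of the covering ℚˣ\𝔸 → X_ℚ over the periodic orbit C_p (given by multiplication by p on ∏_{q ≠ p} ℤ_qˣ) is nontrivial. -/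
/-- Let `p ≠ q` be primes and let `u ∈ ℤ_qˣ` be the unit of the `q`-adic
integers whose underlying element is `p`.  Then `n ↦ uⁿ` is an injective homomorphism
`ℤ → ℤ_qˣ`; consequently the diagonal homomorphism `ℤ → ∏_{q ≠ p} ℤ_qˣ`, `n ↦ (pⁿ)_q`,
is injective, so the monodromy of the covering `ℚˣ\𝔸 → X_ℚ` over the periodic orbit
`C_p` (multiplication by `p` on `∏_{q ≠ p} ℤ_qˣ`) is nontrivial. -/
instance (q : Nat.Primes) : Fact (Nat.Prime (q : ℕ)) := ⟨q.2⟩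

theorem not_isOfFinOrder_of_val_eq_map_of_not_isUnit {M N : Type*} [Monoid M] [Monoid N]
    {f : M →* N} (hf : Function.Injective f) {a : M} (ha : ¬IsUnit a) {u : Nˣ}
    (hu : (u : N) = f a) : ¬IsOfFinOrder u := by
  rw [← Units.isOfFinOrder_val, hu, hf.isOfFinOrder_iff]
  -- The inverse of an element of finite order is one of its powers, so it already lies in `M`.
  exact mt IsOfFinOrder.isUnit ha

theorem not_isOfFinOrder_of_val_eq_natCast {R : Type*} [Semiring R] [CharZero R] {m : ℕ}
    (hm : m ≠ 1) {u : Rˣ} (hu : (u : R) = m) : ¬IsOfFinOrder u :=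
  not_isOfFinOrder_of_val_eq_map_of_not_isUnit (f := (Nat.castRingHom R : ℕ →* R))
    Nat.cast_injective (mt Nat.isUnit_iff.mp hm) hu

theorem statement5_general {R : Type*} [Semiring R] [CharZero R] {m : ℕ} (hm : m ≠ 1)
    {u : Rˣ} (hu : (u : R) = m) {ι : Type*} [Nonempty ι] {S : ι → Type*}
    [∀ i, Semiring (S i)] [∀ i, CharZero (S i)] :
    Function.Injective (fun n : ℤ => u ^ n) ∧
    ∀ U : (i : ι) → (S i)ˣ, (∀ i, (U i : S i) = m) →
      Function.Injective (fun n : ℤ => fun i => U i ^ n) := by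
  refine ⟨injective_zpow_iff_not_isOfFinOrder.mpr (not_isOfFinOrder_of_val_eq_natCast hm hu),
    fun U hU => ?_⟩
  obtain ⟨i⟩ := ‹Nonempty ι›
  have hUi : ¬IsOfFinOrder (U i) := not_isOfFinOrder_of_val_eq_natCast hm (hU i)
  exact injective_zpow_iff_not_isOfFinOrder.mpr fun hfin : IsOfFinOrder U => hUi (hfin.apply i)

theorem statement5 (p q : ℕ) (hp : p.Prime) [hq : Fact q.Prime] (hpq : p ≠ q)
    (u : ℤ_[q]ˣ) (hu : (u : ℤ_[q]) = (p : ℤ_[q])) :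
    Function.Injective (fun n : ℤ => u ^ n) ∧
    ∀ (U : (v : {v : Nat.Primes // (v : ℕ) ≠ p}) → ℤ_[(v.1 : ℕ)]ˣ),
      (∀ v : {v : Nat.Primes // (v : ℕ) ≠ p},
        (U v : ℤ_[(v.1 : ℕ)]) = (p : ℤ_[(v.1 : ℕ)])) →
      Function.Injective (fun n : ℤ => fun v : {v : Nat.Primes // (v : ℕ) ≠ p} => U v ^ n) := by
  have : Nonempty {v : Nat.Primes // (v : ℕ) ≠ p} := ⟨⟨q, hq.out⟩, hpq.symm⟩
  exact statement5_general hp.ne_one hu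
end

section
/- Let T be a finite set of primes and let Γ' ⊆ ℚˣ be the subgroup generated by -1 and the primes in T. For every x = ((x_q)_{q∈T}, x_∞) with x_q ∈ ℚ_qˣ for each q ∈ T and x_∞ ∈ ℝˣ, there exists a unique γ ∈ Γ' such that γ^{-1}·x_q ∈ ℤ_qˣ for all q ∈ T (where γ^{-1} acts via the embedding of ℚ into ℚ_q) and γ^{-1}·x_∞ > 0. In other words, ∏_{q∈T} ℤ_qˣ × ℝ_{>0} is a fundamental domain for the action of Γ' on ∏_{q∈T} ℚ_qˣ × ℝˣ. -/
/-!
Dividing by `γ` moves `x` into `∏ ℤ_qˣ × ℝ_{>0}` exactly when `γ` has the same `q`-adic norms as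
the `x_q` and the same sign as `x_∞`. Some `±∏ q ^ v_q(x_q)` has these norms and this sign, which is
existence. For uniqueness, the quotient of two solutions is a positive rational whose norm is `1`
at every `q ∈ T` by comparison and at every other prime because the generators are units there;
such a rational is an integer together with its inverse, hence equal to `1`.
-/

section Field

variable {K : Type*}

lemma norm_inv_mul_eq_one_iff [NormedDivisionRing K] {a : K} (ha : a ≠ 0) (b : K) :
    ‖a⁻¹ * b‖ = 1 ↔ ‖a‖ = ‖b‖ := by
  rw [norm_mul, norm_inv, inv_mul_eq_one₀ (norm_ne_zero_iff.2 ha)]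

lemma inv_mul_pos_iff_pos_iff_pos [Field K] [LinearOrder K] [IsStrictOrderedRing K] {a b : K}
    (ha : a ≠ 0) (hb : b ≠ 0) : 0 < a⁻¹ * b ↔ (0 < a ↔ 0 < b) := by
  rcases ha.lt_or_gt with ha | ha <;> rcases hb.lt_or_gt with hb | hb <;>
    simp [mul_pos_iff, ha, hb, ha.not_gt, hb.not_gt]

end Field

lemma den_eq_one_of_forall_padic_norm_le_one {r : ℚ}
    (hr : ∀ q : Nat.Primes, ‖(r : ℚ_[(q : ℕ)])‖ ≤ 1) : r.den = 1 := by
  refine Nat.eq_one_iff_not_exists_prime_dvd.2 fun p hp => ?_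
  have : Fact p.Prime := ⟨hp⟩
  exact Rat.padicValuation_le_one_iff.1 <|
    (Padic.norm_rat_le_one_iff_padicValuation_le_one p).1 (hr ⟨p, hp⟩)

lemma eq_one_of_forall_padic_norm_eq_one {r : ℚ} (hpos : 0 < r)
    (hr : ∀ q : Nat.Primes, ‖(r : ℚ_[(q : ℕ)])‖ = 1) : r = 1 := by
  have hden : r.den = 1 := den_eq_one_of_forall_padic_norm_le_one fun q => (hr q).le
  have hden_inv : r⁻¹.den = 1 :=
    den_eq_one_of_forall_padic_norm_le_one fun q => by simp [hr q]
  have hnum : r.num = 1 := by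
    rw [Rat.den_inv_of_ne_zero hpos.ne'] at hden_inv
    have := Rat.num_pos.2 hpos
    omega
  exact Rat.ext hnum hden

/-- A prime number as a unit of `ℚ`: the generators of `signedPrimeSubgroup` other than `-1`. -/
def primeUnit (q : Nat.Primes) : ℚˣ := Units.mk0 (q : ℕ) (mod_cast q.2.ne_zero)

@[simp]
lemma val_primeUnit (q : Nat.Primes) : (primeUnit q : ℚ) = (q : ℕ) := rfl

lemma padic_norm_primeUnit_of_ne {q r : Nat.Primes} (h : q ≠ r) :
    ‖((primeUnit r : ℚ) : ℚ_[(q : ℕ)])‖ = 1 := by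
  rw [val_primeUnit, Rat.cast_natCast, Padic.norm_natCast_eq_one_iff, Nat.coprime_primes q.2 r.2]
  exact Nat.Primes.coe_nat_inj q r |>.not.2 h

/-- The subgroup of `ℚˣ` generated by `-1` and the primes in `S`, which is the group of `S`-units
of `ℚ`. It is the group `Γ'` of the theorem, for a possibly infinite set of primes. -/
def signedPrimeSubgroup (S : Set Nat.Primes) : Subgroup ℚˣ :=
  Subgroup.closure ({-1} ∪ {γ : ℚˣ | ∃ q ∈ S, (γ : ℚ) = ((q : ℕ) : ℚ)})

namespace signedPrimeSubgroup

variable {S : Set Nat.Primes}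

lemma primeUnit_mem {q : Nat.Primes} (hq : q ∈ S) : primeUnit q ∈ signedPrimeSubgroup S :=
  Subgroup.subset_closure (Or.inr ⟨q, hq, rfl⟩)

lemma neg_mem {γ : ℚˣ} (hγ : γ ∈ signedPrimeSubgroup S) : -γ ∈ signedPrimeSubgroup S := by
  rw [← neg_one_mul]
  exact mul_mem (Subgroup.subset_closure (Or.inl rfl)) hγ

lemma padic_norm_eq_one_of_notMem {γ : ℚˣ} (hγ : γ ∈ signedPrimeSubgroup S) {q : Nat.Primes}
    (hq : q ∉ S) : ‖((γ : ℚ) : ℚ_[(q : ℕ)])‖ = 1 := by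
  induction hγ using Subgroup.closure_induction with
  | mem γ hγ =>
    rcases hγ with rfl | ⟨r, hr, hγ⟩
    · simp
    · rw [hγ]
      exact padic_norm_primeUnit_of_ne (ne_of_mem_of_not_mem hr hq).symm
  | one => simp
  | mul γ δ _ _ hγ hδ => simp [hγ, hδ]
  | inv γ _ hγ => simp [hγ]

lemma eq_of_padic_norm_eq_of_pos_iff_pos {γ δ : ℚˣ} (hγ : γ ∈ signedPrimeSubgroup S)
    (hδ : δ ∈ signedPrimeSubgroup S)
    (hnorm : ∀ q ∈ S, ‖((γ : ℚ) : ℚ_[(q : ℕ)])‖ = ‖((δ : ℚ) : ℚ_[(q : ℕ)])‖)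
    (hsign : 0 < (γ : ℚ) ↔ 0 < (δ : ℚ)) : γ = δ := by
  have hpos : 0 < (γ : ℚ)⁻¹ * δ :=
    (inv_mul_pos_iff_pos_iff_pos γ.ne_zero δ.ne_zero).2 hsign
  have hnorm_all (q : Nat.Primes) : ‖((γ : ℚ) : ℚ_[(q : ℕ)])‖ = ‖((δ : ℚ) : ℚ_[(q : ℕ)])‖ := by
    by_cases hq : q ∈ S
    · exact hnorm q hq
    · rw [padic_norm_eq_one_of_notMem hγ hq, padic_norm_eq_one_of_notMem hδ hq]
  have hquot : (γ : ℚ)⁻¹ * δ = 1 := by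
    refine eq_one_of_forall_padic_norm_eq_one hpos fun q => ?_
    rw [Rat.cast_mul, Rat.cast_inv,
      norm_inv_mul_eq_one_iff (Rat.cast_ne_zero.2 γ.ne_zero), hnorm_all]
  exact Units.ext ((inv_mul_eq_one₀ γ.ne_zero).1 hquot)

lemma exists_pos_and_padic_norm_eq_zpow {T : Finset Nat.Primes} (n : T → ℤ) :
    ∃ γ ∈ signedPrimeSubgroup T, 0 < (γ : ℚ) ∧
      ∀ q : T, ‖((γ : ℚ) : ℚ_[(q.1 : ℕ)])‖ = (q.1 : ℝ) ^ (-n q) := by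
  refine ⟨∏ q, primeUnit q.1 ^ n q,
    prod_mem fun q _ => zpow_mem (primeUnit_mem q.2) _, ?_, fun q => ?_⟩
  · rw [Units.coe_prod]
    refine Finset.prod_pos fun q _ => ?_
    rw [Units.val_zpow_eq_zpow_val]
    exact zpow_pos (Nat.cast_pos.2 q.1.2.pos) _
  · simp only [Units.coe_prod, Units.val_zpow_eq_zpow_val, Rat.cast_prod, Rat.cast_zpow, norm_prod]
    rw [Fintype.prod_eq_single q fun r hr => ?_]
    · rw [val_primeUnit, Rat.cast_natCast, Padic.norm_p_zpow]
    · rw [norm_zpow, padic_norm_primeUnit_of_ne (Subtype.coe_ne_coe.2 hr.symm), one_zpow]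

lemma exists_padic_norm_eq_and_pos_iff {T : Finset Nat.Primes}
    (x : (q : T) → ℚ_[(q.1 : ℕ)]ˣ) (P : Prop) :
    ∃ γ ∈ signedPrimeSubgroup T,
      (∀ q : T, ‖((γ : ℚ) : ℚ_[(q.1 : ℕ)])‖ = ‖(x q : ℚ_[(q.1 : ℕ)])‖) ∧ (0 < (γ : ℚ) ↔ P) := by
  obtain ⟨γ, hγ, hpos, hval⟩ :=
    exists_pos_and_padic_norm_eq_zpow fun q : T => (x q : ℚ_[(q.1 : ℕ)]).valuation
  have hnorm (q : T) : ‖((γ : ℚ) : ℚ_[(q.1 : ℕ)])‖ = ‖(x q : ℚ_[(q.1 : ℕ)])‖ := by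
    rw [hval, Padic.norm_eq_zpow_neg_valuation (x q).ne_zero]
  by_cases hP : P
  · exact ⟨γ, hγ, hnorm, iff_of_true hpos hP⟩
  · refine ⟨-γ, neg_mem hγ, fun q => ?_, iff_of_false ?_ hP⟩
    · rw [Units.val_neg, Rat.cast_neg, norm_neg, hnorm]
    · rw [Units.val_neg, neg_pos]
      exact hpos.not_gt

end signedPrimeSubgroup

/-- Let `T` be a finite set of primes and `Γ' ⊆ ℚˣ` the subgroup
generated by `-1` and the primes in `T`.  For every `x = ((x_q)_{q∈T}, x_∞)` with
`x_q ∈ ℚ_qˣ` and `x_∞ ∈ ℝˣ` there is a unique `γ ∈ Γ'` with `γ⁻¹·x_q ∈ ℤ_qˣ` for all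
`q ∈ T` (i.e. `‖γ⁻¹·x_q‖_q = 1`) and `γ⁻¹·x_∞ > 0`: the set `∏_{q∈T} ℤ_qˣ × ℝ_{>0}` is
a fundamental domain for the action of `Γ'` on `∏_{q∈T} ℚ_qˣ × ℝˣ`. -/
theorem statement15 (T : Finset Nat.Primes) (Γ' : Subgroup ℚˣ)
    (hΓ' : Γ' = Subgroup.closure ({-1} ∪ {γ : ℚˣ | ∃ q ∈ T, (γ : ℚ) = ((q : ℕ) : ℚ)}))
    (x : ((q : T) → ℚ_[(q.1 : ℕ)]ˣ) × ℝˣ) :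
    ∃! γ : ℚˣ, γ ∈ Γ' ∧
      (∀ q : T, ‖((((γ⁻¹ : ℚˣ) : ℚ) : ℚ_[(q.1 : ℕ)]) * (x.1 q : ℚ_[(q.1 : ℕ)]))‖ = 1) ∧
      0 < (((γ⁻¹ : ℚˣ) : ℚ) : ℝ) * (x.2 : ℝ) := by
  subst hΓ'
  have hunit (γ : ℚˣ) (q : T) :
      ‖((((γ⁻¹ : ℚˣ) : ℚ) : ℚ_[(q.1 : ℕ)]) * (x.1 q : ℚ_[(q.1 : ℕ)]))‖ = 1 ↔
        ‖((γ : ℚ) : ℚ_[(q.1 : ℕ)])‖ = ‖(x.1 q : ℚ_[(q.1 : ℕ)])‖ := by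
    rw [Units.val_inv_eq_inv_val, Rat.cast_inv,
      norm_inv_mul_eq_one_iff (Rat.cast_ne_zero.2 γ.ne_zero)]
  have hpos (γ : ℚˣ) : 0 < (((γ⁻¹ : ℚˣ) : ℚ) : ℝ) * (x.2 : ℝ) ↔ (0 < (γ : ℚ) ↔ 0 < (x.2 : ℝ)) := by
    rw [Units.val_inv_eq_inv_val, Rat.cast_inv,
      inv_mul_pos_iff_pos_iff_pos (Rat.cast_ne_zero.2 γ.ne_zero) x.2.ne_zero, Rat.cast_pos]
  simp only [hunit, hpos]
  obtain ⟨γ, hγ, hnorm, hsign⟩ :=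
    signedPrimeSubgroup.exists_padic_norm_eq_and_pos_iff x.1 (0 < (x.2 : ℝ))
  refine ⟨γ, ⟨hγ, hnorm, hsign⟩, fun δ ⟨hδ, hδnorm, hδsign⟩ => ?_⟩
  exact signedPrimeSubgroup.eq_of_padic_norm_eq_of_pos_iff_pos hδ hγ
    (fun q hq => (hδnorm ⟨q, hq⟩).trans (hnorm ⟨q, hq⟩).symm) (hδsign.trans hsign.symm)
end
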